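/- arXiv:math/0506117 — 4 statements merged into one kernel-verified Lean document; each statement's English description precedes it below -/
import Mathlib

section
/- Let m ≥ 1 and let k₁,…,k_m be positive integers. For every complex number z with |z| < 1, the family z^{n_m}/(n₁^{k₁}·…·n_m^{k_m}), indexed by m-tuples of positive integers with 0 < n₁ < ⋯ < n_m, is summable in ℂ, and the resulting function z ↦ Li_{k₁,…,k_m}(z) is holomorphic (complex differentiable) on the open unit disc {z ∈ ℂ : |z| < 1}. -/
/-- Index type for multiple polylogarithm sums: strictly increasing tuples of
positive integers `0 < n₁ < ⋯ < n_{m+1}`. -/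
def MPLIdx (m : ℕ) : Type :=
  {f : Fin (m + 1) → ℕ // StrictMono f ∧ ∀ i, 0 < f i}

/-- The one-variable multiple polylogarithm
`Li_{k₁,…,k_{m+1}}(z) = Σ_{0<n₁<⋯<n_{m+1}} z^{n_{m+1}}/(n₁^{k₁}⋯n_{m+1}^{k_{m+1}})`. -/
noncomputable def MPL (m : ℕ) (k : Fin (m + 1) → ℕ) (z : ℂ) : ℂ :=
  ∑' n : MPLIdx m, z ^ (n.1 (Fin.last m)) / ∏ i, ((n.1 i : ℂ)) ^ k i

/- The largest entry `N` of an `M`-tuple of natural numbers satisfies `s ^ (M * N) ≤ ∏ i, s ^ nᵢ`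
for `0 ≤ s ≤ 1`. Taking for `s` an `M`-th root of `r`, the sum of `r ^ N` over all tuples is
dominated by a product of geometric series when `r < 1`. As the denominators of the polylogarithm
have modulus at least `1`, this gives absolute convergence, uniformly on every smaller disc, and
the Weierstrass theorem on uniform limits of holomorphic functions applies. -/

section SummableTuples

variable {ι : Type*} [Fintype ι]

theorem summable_pi_prod_of_nonneg {κ : ι → Type*} {f : ∀ i, κ i → ℝ}
    (hf₀ : ∀ i j, 0 ≤ f i j) (hf : ∀ i, Summable (f i)) :
    Summable fun x : ∀ i, κ i ↦ ∏ i, f i (x i) := by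
  classical
  have prod_nonneg (x : ∀ i, κ i) : 0 ≤ ∏ i, f i (x i) :=
    Finset.prod_nonneg fun i _ ↦ hf₀ i (x i)
  refine summable_of_sum_le (c := ∏ i, ∑' j, f i j) prod_nonneg fun u ↦ ?_
  let t (i : ι) : Finset (κ i) := u.image fun x ↦ x i
  have u_subset_box : u ⊆ Fintype.piFinset t := fun x hx ↦
    Fintype.mem_piFinset.2 fun i ↦ Finset.mem_image_of_mem (fun x ↦ x i) hx
  calc ∑ x ∈ u, ∏ i, f i (x i)
      ≤ ∑ x ∈ Fintype.piFinset t, ∏ i, f i (x i) :=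
        Finset.sum_le_sum_of_subset_of_nonneg u_subset_box fun x _ _ ↦ prod_nonneg x
    _ = ∏ i, ∑ j ∈ t i, f i j := (Finset.prod_univ_sum t f).symm
    _ ≤ ∏ i, ∑' j, f i j :=
        Finset.prod_le_prod (fun i _ ↦ Finset.sum_nonneg fun j _ ↦ hf₀ i j)
          fun i _ ↦ (hf i).sum_le_tsum (t i) fun j _ ↦ hf₀ i j

theorem pow_card_mul_sup_le_prod_pow {R : Type*} [CommSemiring R] [PartialOrder R]
    [IsOrderedRing R] {s : R} (hs₀ : 0 ≤ s) (hs₁ : s ≤ 1) (n : ι → ℕ) :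
    s ^ (Fintype.card ι * Finset.univ.sup n) ≤ ∏ i, s ^ n i := by
  rw [Finset.prod_pow_eq_pow_sum]
  exact pow_le_pow_of_le_one hs₀ hs₁ <|
    Finset.sum_le_card_nsmul _ _ _ fun i hi ↦ Finset.le_sup hi

theorem summable_pow_sup {r : ℝ} (hr₀ : 0 ≤ r) (hr₁ : r < 1) :
    Summable fun n : ι → ℕ ↦ r ^ Finset.univ.sup n := by
  cases isEmpty_or_nonempty ι
  · exact .of_finite
  obtain ⟨s, hs₀, hs₁, rfl⟩ : ∃ s : ℝ, 0 ≤ s ∧ s < 1 ∧ s ^ Fintype.card ι = r :=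
    ⟨r ^ (Fintype.card ι : ℝ)⁻¹, Real.rpow_nonneg hr₀ _, Real.rpow_lt_one hr₀ hr₁ (by positivity),
      Real.rpow_inv_natCast_pow hr₀ Fintype.card_ne_zero⟩
  have summable_prod : Summable fun n : ι → ℕ ↦ ∏ i, s ^ n i :=
    summable_pi_prod_of_nonneg (fun _ j ↦ pow_nonneg hs₀ j)
      fun _ ↦ summable_geometric_of_lt_one hs₀ hs₁
  refine .of_nonneg_of_le (fun n ↦ pow_nonneg hr₀ _) (fun n ↦ ?_) summable_prod
  simpa only [pow_mul] using pow_card_mul_sup_le_prod_pow hs₀ hs₁.le n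

end SummableTuples

theorem differentiableOn_tsum_pow_smul {ι E : Type*} [NormedAddCommGroup E] [NormedSpace ℂ E]
    [CompleteSpace E] {d : ι → ℕ} {a : ι → E} {R : ℝ}
    (h : ∀ r, 0 ≤ r → r < R → Summable fun i ↦ r ^ d i * ‖a i‖) :
    DifferentiableOn ℂ (fun z : ℂ ↦ ∑' i, z ^ d i • a i) (Metric.ball 0 R) := by
  intro z hz
  obtain ⟨r, hzr, hrR⟩ := exists_between (mem_ball_zero_iff.1 hz)
  have hr₀ : 0 ≤ r := (norm_nonneg z).trans hzr.le
  have differentiableOn_smaller_ball :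
      DifferentiableOn ℂ (fun z : ℂ ↦ ∑' i, z ^ d i • a i) (Metric.ball 0 r) := by
    refine Complex.differentiableOn_tsum_of_summable_norm (h r hr₀ hrR) (fun i ↦ by fun_prop)
      Metric.isOpen_ball fun i w hw ↦ ?_
    rw [norm_smul, norm_pow]
    gcongr
    exact (mem_ball_zero_iff.1 hw).le
  exact (differentiableOn_smaller_ball.differentiableAt <|
    Metric.isOpen_ball.mem_nhds (mem_ball_zero_iff.2 hzr)).differentiableWithinAt

theorem norm_inv_prod_natCast_pow_le_one {ι 𝕜 : Type*} [RCLike 𝕜] (s : Finset ι) (n k : ι → ℕ) :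
    ‖(∏ i ∈ s, (n i : 𝕜) ^ k i)⁻¹‖ ≤ 1 := by
  have prod_eq_natCast : ∏ i ∈ s, (n i : 𝕜) ^ k i = (∏ i ∈ s, n i ^ k i : ℕ) := by push_cast; rfl
  rw [prod_eq_natCast, norm_inv, RCLike.norm_natCast]
  -- A vanishing product is covered because `0⁻¹ = 0`.
  exact Nat.cast_inv_le_one _

namespace MPLIdx

variable {m : ℕ}

theorem sup_eq_last (n : MPLIdx m) : Finset.univ.sup n.1 = n.1 (Fin.last m) :=
  sup_eq_of_isMaxOn (Finset.mem_univ _) fun i _ ↦ n.2.1.monotone (Fin.le_last i)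

theorem summable_pow_last {r : ℝ} (hr₀ : 0 ≤ r) (hr₁ : r < 1) :
    Summable fun n : MPLIdx m ↦ r ^ n.1 (Fin.last m) := by
  have summable_sup : Summable fun n : MPLIdx m ↦ r ^ Finset.univ.sup n.1 :=
    (summable_pow_sup hr₀ hr₁).comp_injective Subtype.val_injective
  simpa only [sup_eq_last] using summable_sup

theorem summable_pow_last_mul_norm_inv (k : Fin (m + 1) → ℕ) {r : ℝ} (hr₀ : 0 ≤ r) (hr₁ : r < 1) :
    Summable fun n : MPLIdx m ↦ r ^ n.1 (Fin.last m) * ‖(∏ i, (n.1 i : ℂ) ^ k i)⁻¹‖ :=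
  .of_nonneg_of_le (fun _ ↦ mul_nonneg (pow_nonneg hr₀ _) (norm_nonneg _))
    (fun n ↦ mul_le_of_le_one_right (pow_nonneg hr₀ _)
      (norm_inv_prod_natCast_pow_le_one _ n.1 k))
    (summable_pow_last hr₀ hr₁)

end MPLIdx

theorem mpl_summable_and_holomorphic_general (m : ℕ) (k : Fin (m + 1) → ℕ) :
    (∀ z : ℂ, ‖z‖ < 1 →
      Summable (fun n : MPLIdx m =>
        z ^ (n.1 (Fin.last m)) / ∏ i, ((n.1 i : ℂ)) ^ k i)) ∧
    DifferentiableOn ℂ (MPL m k) {z : ℂ | ‖z‖ < 1} := by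
  constructor
  · intro z hz
    refine .of_norm ?_
    simpa only [div_eq_mul_inv, norm_mul, norm_pow] using
      MPLIdx.summable_pow_last_mul_norm_inv k (norm_nonneg z) hz
  · have differentiableOn_ball := differentiableOn_tsum_pow_smul fun r hr₀ hr₁ ↦
      MPLIdx.summable_pow_last_mul_norm_inv k hr₀ hr₁
    unfold MPL
    simpa only [smul_eq_mul, ← div_eq_mul_inv, ball_zero_eq] using differentiableOn_ball

/-- for positive integers `k₁,…,k_{m+1}` and `|z| < 1`, the
defining family of the multiple polylogarithm is summable in `ℂ`, and the
resulting function `z ↦ Li_{k₁,…,k_{m+1}}(z)` is holomorphic on the open unit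
disc. -/
theorem mpl_summable_and_holomorphic (m : ℕ) (k : Fin (m + 1) → ℕ)
    (hk : ∀ i, 1 ≤ k i) :
    (∀ z : ℂ, ‖z‖ < 1 →
      Summable (fun n : MPLIdx m =>
        z ^ (n.1 (Fin.last m)) / ∏ i, ((n.1 i : ℂ)) ^ k i)) ∧
    DifferentiableOn ℂ (MPL m k) {z : ℂ | ‖z‖ < 1} :=
  mpl_summable_and_holomorphic_general m k
end

section
/- Let k₁, k₂ be integers with k₁ ≥ 2 and k₂ ≥ 2. Then the integral shuffle product formula (Euler decomposition) holds: ζ(k₁)·ζ(k₂) = Σ_{i=0}^{k₁−1} C(k₂−1+i, i)·ζ(k₁−i, k₂+i) + Σ_{j=0}^{k₂−1} C(k₁−1+j, j)·ζ(k₂−j, k₁+j), where C(·,·) denotes the binomial coefficient. -/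
/-- The single zeta value `ζ(k) = Σ_{n≥1} 1/n^k`. -/
noncomputable def zeta1 (k : ℕ) : ℝ :=
  ∑' n : ℕ+, ((n : ℝ) ^ k)⁻¹

/-- The double zeta value `ζ(a,b) = Σ_{0<n₁<n₂} 1/(n₁^a n₂^b)`. -/
noncomputable def zeta2 (a b : ℕ) : ℝ :=
  ∑' q : {q : ℕ+ × ℕ+ // q.1 < q.2}, ((q.1.1 : ℝ) ^ a * (q.1.2 : ℝ) ^ b)⁻¹

/-!
Put `x = 1/u`, `y = 1/v` and `z = 1/(u + v)`, so that `x * y = z * (x + y)`. Applying this relation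
repeatedly expands `x ^ k₁ * y ^ k₂` into the monomials `x ^ (k₁ - i) * z ^ (k₂ + i)` and
`y ^ (k₂ - j) * z ^ (k₁ + j)`, with Pascal's rule governing the coefficients. Summing over all
`u, v ≥ 1` gives the formula, because `(u, v) ↦ (u, u + v)` and `(u, v) ↦ (v, u + v)` both
parametrize the pairs `0 < n₁ < n₂`.
-/

open Finset

section PartialFractions

variable {R : Type*} [CommSemiring R]

/-- One of the two halves of Euler's partial fraction expansion: the terms of `x ^ m * y ^ n`,
where `x * y = z * (x + y)`, that involve only `x` and `z`. The coefficient `n.multichoose i` is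
`(n - 1 + i).choose i` for `n ≠ 0`, and it makes Pascal's rule hold from `n = 0` on. -/
def eulerHalf (x z : R) (m n : ℕ) : R :=
  ∑ i ∈ range m, n.multichoose i * (x ^ (m - i) * z ^ (n + i))

lemma eulerHalf_zero_left (x z : R) (n : ℕ) : eulerHalf x z 0 n = 0 :=
  sum_range_zero _

lemma eulerHalf_succ_zero (x z : R) (m : ℕ) : eulerHalf x z (m + 1) 0 = x ^ (m + 1) := by
  simp [eulerHalf, sum_range_succ']

lemma eulerHalf_succ_succ (x z : R) (m n : ℕ) :
    eulerHalf x z (m + 1) (n + 1) = z * (eulerHalf x z m (n + 1) + eulerHalf x z (m + 1) n) := by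
  simp only [eulerHalf, sum_range_succ' _ m, Nat.multichoose_succ_succ, Nat.multichoose_zero_right,
    Nat.add_sub_add_right, mul_add, mul_sum, ← add_assoc, ← sum_add_distrib]
  congr 1
  · refine sum_congr rfl fun i _ => ?_
    push_cast
    ring
  · ring

theorem pow_mul_pow_eq_eulerHalf_add_eulerHalf {x y z : R} (h : x * y = z * (x + y)) :
    ∀ {m n : ℕ}, m + n ≠ 0 → x ^ m * y ^ n = eulerHalf x z m n + eulerHalf y z n m
  | 0, 0, hmn => absurd rfl hmn
  | 0, n + 1, _ => by simp [eulerHalf_zero_left, eulerHalf_succ_zero]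
  | m + 1, 0, _ => by simp [eulerHalf_zero_left, eulerHalf_succ_zero]
  | m + 1, n + 1, _ => by
    have ih_left : x ^ m * y ^ (n + 1) = eulerHalf x z m (n + 1) + eulerHalf y z (n + 1) m :=
      pow_mul_pow_eq_eulerHalf_add_eulerHalf h (by omega)
    have ih_right : x ^ (m + 1) * y ^ n = eulerHalf x z (m + 1) n + eulerHalf y z n (m + 1) :=
      pow_mul_pow_eq_eulerHalf_add_eulerHalf h (by omega)
    calc x ^ (m + 1) * y ^ (n + 1)
        = x ^ m * y ^ n * (x * y) := by ring
      _ = z * (x ^ m * y ^ (n + 1) + x ^ (m + 1) * y ^ n) := by rw [h]; ring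
      _ = eulerHalf x z (m + 1) (n + 1) + eulerHalf y z (n + 1) (m + 1) := by
        rw [ih_left, ih_right, eulerHalf_succ_succ, eulerHalf_succ_succ]; ring

end PartialFractions

lemma inv_mul_inv_eq_inv_add_mul {K : Type*} [Field K] {u v : K} (hu : u ≠ 0) (hv : v ≠ 0)
    (huv : u + v ≠ 0) : u⁻¹ * v⁻¹ = (u + v)⁻¹ * (u⁻¹ + v⁻¹) := by
  field_simp
  ring

lemma summable_pnat_rpow_inv {s : ℝ} (hs : 1 < s) : Summable fun n : ℕ+ => (n : ℝ)⁻¹ ^ s := by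
  simpa only [Function.comp_def, Real.inv_rpow (Nat.cast_nonneg _)] using
    (Real.summable_nat_rpow_inv.mpr hs).comp_injective PNat.coe_injective

lemma hasSum_zeta1 {k : ℕ} (hk : 2 ≤ k) : HasSum (fun n : ℕ+ => (n : ℝ)⁻¹ ^ k) (zeta1 k) := by
  have hsum : Summable fun n : ℕ+ => (n : ℝ)⁻¹ ^ k := by
    exact_mod_cast summable_pnat_rpow_inv (s := k) (by exact_mod_cast hk)
  simpa only [zeta1, inv_pow] using hsum.hasSum

lemma hasSum_zeta1_mul_zeta1 {k l : ℕ} (hk : 2 ≤ k) (hl : 2 ≤ l) :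
    HasSum (fun p : ℕ+ × ℕ+ => (p.1 : ℝ)⁻¹ ^ k * (p.2 : ℝ)⁻¹ ^ l) (zeta1 k * zeta1 l) :=
  (hasSum_zeta1 hk).mul (hasSum_zeta1 hl) <|
    (hasSum_zeta1 hk).summable.mul_of_nonneg (hasSum_zeta1 hl).summable
      (fun _ => by positivity) (fun _ => by positivity)

lemma inv_pow_mul_inv_add_pow_le {u v : ℝ} (hu : 1 ≤ u) (hv : 0 < v) {a b : ℕ}
    (ha : 1 ≤ a) (hb : 2 ≤ b) :
    u⁻¹ ^ a * (u + v)⁻¹ ^ b ≤ u⁻¹ ^ (3 / 2 : ℝ) * v⁻¹ ^ (3 / 2 : ℝ) := by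
  have hu₀ : 0 < u := one_pos.trans_le hu
  have hz : 0 < (u + v)⁻¹ := by positivity
  have hzu : (u + v)⁻¹ ≤ u⁻¹ := inv_anti₀ hu₀ (by linarith)
  have hzv : (u + v)⁻¹ ≤ v⁻¹ := inv_anti₀ hv (by linarith)
  have hu_le_one : u⁻¹ ≤ 1 := inv_le_one_of_one_le₀ hu
  calc u⁻¹ ^ a * (u + v)⁻¹ ^ b
      ≤ u⁻¹ ^ 1 * (u + v)⁻¹ ^ 2 := by
        gcongr ?_ * ?_
        · exact pow_le_pow_of_le_one (by positivity) hu_le_one ha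
        · exact pow_le_pow_of_le_one hz.le (hzu.trans hu_le_one) hb
    _ = u⁻¹ * ((u + v)⁻¹ ^ (1 / 2 : ℝ) * (u + v)⁻¹ ^ (3 / 2 : ℝ)) := by
        rw [← Real.rpow_add hz, pow_one, ← Real.rpow_natCast]
        norm_num
    _ ≤ u⁻¹ * (u⁻¹ ^ (1 / 2 : ℝ) * v⁻¹ ^ (3 / 2 : ℝ)) := by gcongr
    _ = u⁻¹ ^ (3 / 2 : ℝ) * v⁻¹ ^ (3 / 2 : ℝ) := by
        rw [← mul_assoc, ← Real.rpow_one_add' (by positivity) (by norm_num)]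
        norm_num

lemma summable_inv_pow_mul_inv_add_pow {a b : ℕ} (ha : 1 ≤ a) (hb : 2 ≤ b) :
    Summable fun p : ℕ+ × ℕ+ => (p.1 : ℝ)⁻¹ ^ a * ((p.1 : ℝ) + p.2)⁻¹ ^ b := by
  have hs : Summable fun n : ℕ+ => (n : ℝ)⁻¹ ^ (3 / 2 : ℝ) := summable_pnat_rpow_inv (by norm_num)
  refine .of_nonneg_of_le (fun _ => by positivity) (fun p => ?_)
    (hs.mul_of_nonneg hs (fun _ => by positivity) (fun _ => by positivity))
  have one_le_fst : (1 : ℝ) ≤ p.1 := by exact_mod_cast p.1.pos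
  exact inv_pow_mul_inv_add_pow_le one_le_fst (by positivity) ha hb

/-- The parametrization `(u, v) ↦ (u, u + v)` of the index set of `zeta2`, i.e. of the pairs
`n₁ < n₂` by `n₁` and the gap `n₂ - n₁`. -/
def pnatProdEquivLT : ℕ+ × ℕ+ ≃ {q : ℕ+ × ℕ+ // q.1 < q.2} where
  toFun p := ⟨(p.1, p.1 + p.2), PNat.lt_add_right _ _⟩
  invFun q := (q.1.1, q.1.2 - q.1.1)
  left_inv p := Prod.ext rfl (add_left_cancel (PNat.add_sub_of_lt (PNat.lt_add_right p.1 p.2)))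
  right_inv q := Subtype.ext (Prod.ext rfl (PNat.add_sub_of_lt q.2))

lemma hasSum_zeta2 {a b : ℕ} (ha : 1 ≤ a) (hb : 2 ≤ b) :
    HasSum (fun p : ℕ+ × ℕ+ => (p.1 : ℝ)⁻¹ ^ a * ((p.1 : ℝ) + p.2)⁻¹ ^ b) (zeta2 a b) := by
  convert (summable_inv_pow_mul_inv_add_pow ha hb).hasSum using 1
  rw [zeta2, ← pnatProdEquivLT.tsum_eq]
  simp [pnatProdEquivLT, mul_comm]

lemma hasSum_eulerHalf (m : ℕ) {n : ℕ} (hn : 2 ≤ n) :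
    HasSum (fun p : ℕ+ × ℕ+ => eulerHalf (p.1 : ℝ)⁻¹ ((p.1 : ℝ) + p.2)⁻¹ m n)
      (∑ i ∈ range m, ((n - 1 + i).choose i : ℝ) * zeta2 (m - i) (n + i)) := by
  refine hasSum_sum fun i hi => ?_
  have hcoeff : n.multichoose i = (n - 1 + i).choose i := by
    rw [Nat.multichoose_eq, Nat.sub_add_comm (by omega)]
  rw [hcoeff]
  exact (hasSum_zeta2 (Nat.sub_pos_of_lt (mem_range.mp hi)) (by omega)).mul_left _

/-- the integral shuffle product formula (Euler decomposition)
`ζ(k₁)·ζ(k₂) = Σ_{i=0}^{k₁−1} C(k₂−1+i,i)·ζ(k₁−i,k₂+i)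
             + Σ_{j=0}^{k₂−1} C(k₁−1+j,j)·ζ(k₂−j,k₁+j)` for `k₁, k₂ ≥ 2`. -/
theorem zeta_shuffle (k₁ k₂ : ℕ) (h₁ : 2 ≤ k₁) (h₂ : 2 ≤ k₂) :
    zeta1 k₁ * zeta1 k₂ =
      (∑ i ∈ Finset.range k₁, (Nat.choose (k₂ - 1 + i) i : ℝ) * zeta2 (k₁ - i) (k₂ + i)) +
      (∑ j ∈ Finset.range k₂, (Nat.choose (k₁ - 1 + j) j : ℝ) * zeta2 (k₂ - j) (k₁ + j)) := by
  have expansion (p : ℕ+ × ℕ+) : (p.1 : ℝ)⁻¹ ^ k₁ * (p.2 : ℝ)⁻¹ ^ k₂ =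
      eulerHalf (p.1 : ℝ)⁻¹ ((p.1 : ℝ) + p.2)⁻¹ k₁ k₂ +
      eulerHalf (p.2 : ℝ)⁻¹ ((p.2 : ℝ) + p.1)⁻¹ k₂ k₁ := by
    rw [add_comm (p.2 : ℝ)]
    exact pow_mul_pow_eq_eulerHalf_add_eulerHalf
      (inv_mul_inv_eq_inv_add_mul (by positivity) (by positivity) (by positivity)) (by omega)
  have swapped_half : HasSum
      (fun p : ℕ+ × ℕ+ => eulerHalf (p.2 : ℝ)⁻¹ ((p.2 : ℝ) + p.1)⁻¹ k₂ k₁)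
      (∑ j ∈ range k₂, ((k₁ - 1 + j).choose j : ℝ) * zeta2 (k₂ - j) (k₁ + j)) := by
    simpa only [Function.comp_def, Equiv.prodComm_apply, Prod.fst_swap, Prod.snd_swap] using
      (Equiv.prodComm ℕ+ ℕ+).hasSum_iff.mpr (hasSum_eulerHalf k₂ h₁)
  refine (hasSum_zeta1_mul_zeta1 h₁ h₂).unique ?_
  simpa only [expansion] using (hasSum_eulerHalf k₁ h₂).add swapped_half
end

section
/- Let k₁, k₂ be positive integers. For every complex z with |z| < 1, the one-variable multiple polylogarithms satisfy the integral shuffle product formula: Li_{k₁}(z)·Li_{k₂}(z) = Σ_{i=0}^{k₁−1} C(k₂−1+i, i)·Li_{k₁−i, k₂+i}(z) + Σ_{j=0}^{k₂−1} C(k₁−1+j, j)·Li_{k₂−j, k₁+j}(z), where C(·,·) denotes the binomial coefficient. -/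
/-- The classical polylogarithm `Li_k(z) = Σ_{n≥1} z^n/n^k`. -/
noncomputable def cLi1 (k : ℕ) (z : ℂ) : ℂ :=
  ∑' n : ℕ+, z ^ (n : ℕ) / ((n : ℕ) : ℂ) ^ k

/-- The depth-two multiple polylogarithm
`Li_{a,b}(z) = Σ_{0<n₁<n₂} z^{n₂}/(n₁^a n₂^b)`. -/
noncomputable def cLi2 (a b : ℕ) (z : ℂ) : ℂ :=
  ∑' q : {q : ℕ+ × ℕ+ // q.1 < q.2},
    z ^ ((q.1.2 : ℕ)) / (((q.1.1 : ℕ) : ℂ) ^ a * ((q.1.2 : ℕ) : ℂ) ^ b)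

/-! The product is `Σ z^(m+n) / (m^k₁ n^k₂)` over all positive `m, n`. Iterating
`1/(m n) = 1/(m+n) * (1/m + 1/n)` splits each summand into terms in which only `m` and `m+n`, or
only `n` and `m+n`, occur in the denominator; summing a term of the first kind with `n₁ = m`,
`n₂ = m + n` gives a depth-two polylogarithm, and the second kind is symmetric. -/

section PartialFractions

variable {R : Type*} [CommSemiring R]

/-- The part of the partial fraction decomposition of `x ^ a * y ^ b` that involves `x`, for
`x, y, w` playing the roles of `1/m, 1/n, 1/(m+n)`. The coefficient `b.multichoose i` is the
binomial coefficient `(b+i-1 choose i)`, free of the truncated subtraction. -/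
def partialFractionSum (x w : R) (a b : ℕ) : R :=
  ∑ i ∈ Finset.range a, (b.multichoose i : R) * (x ^ (a - i) * w ^ (b + i))

@[simp]
lemma partialFractionSum_zero_left (x w : R) (b : ℕ) : partialFractionSum x w 0 b = 0 :=
  Finset.sum_range_zero _

@[simp]
lemma partialFractionSum_succ_zero (x w : R) (a : ℕ) :
    partialFractionSum x w (a + 1) 0 = x ^ (a + 1) := by
  simp [partialFractionSum, Finset.sum_range_succ']

lemma partialFractionSum_succ_succ (x w : R) (a b : ℕ) :
    partialFractionSum x w (a + 1) (b + 1) =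
      w * (partialFractionSum x w (a + 1) b + partialFractionSum x w a (b + 1)) := by
  have pascal (i : ℕ) :
      ((b + 1).multichoose (i + 1) : R) * (x ^ (a - i) * w ^ (b + 1 + (i + 1))) =
        w * (b.multichoose (i + 1) * (x ^ (a - i) * w ^ (b + (i + 1)))) +
          w * ((b + 1).multichoose i * (x ^ (a - i) * w ^ (b + 1 + i))) := by
    rw [Nat.multichoose_succ_succ]
    push_cast
    ring
  simp only [partialFractionSum, Finset.sum_range_succ' _ a, Nat.add_sub_add_right, pascal,
    Finset.sum_add_distrib, ← Finset.mul_sum, Nat.multichoose_zero_right]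
  ring

theorem pow_mul_pow_eq_partialFractionSum_add {x y w : R} (h : x * y = w * (x + y)) :
    ∀ {a b : ℕ}, a + b ≠ 0 →
      x ^ a * y ^ b = partialFractionSum x w a b + partialFractionSum y w b a
  | 0, 0, hab => absurd rfl hab
  | 0, b + 1, _ => by simp
  | a + 1, 0, _ => by simp
  | a + 1, b + 1, _ => by
    have lower_right := pow_mul_pow_eq_partialFractionSum_add h (a := a + 1) (b := b) (by lia)
    have lower_left := pow_mul_pow_eq_partialFractionSum_add h (a := a) (b := b + 1) (by lia)
    calc x ^ (a + 1) * y ^ (b + 1)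
        = x * y * (x ^ a * y ^ b) := by ring
      _ = w * (x ^ (a + 1) * y ^ b + x ^ a * y ^ (b + 1)) := by rw [h]; ring
      _ = _ := by
        rw [lower_right, lower_left, partialFractionSum_succ_succ, partialFractionSum_succ_succ]
        ring

end PartialFractions

lemma norm_div_pnat_pow_le {𝕜 : Type*} [NormedDivisionRing 𝕜] [NormSMulClass ℤ 𝕜]
    (w : 𝕜) (n : ℕ+) (k : ℕ) :
    ‖w / ((n : ℕ) : 𝕜) ^ k‖ ≤ ‖w‖ := by
  have one_le_n : (1 : ℝ) ≤ (n : ℕ) := by exact_mod_cast one_le (a := n)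
  rw [norm_div, norm_pow, norm_natCast]
  exact div_le_self (norm_nonneg w) (one_le_pow₀ one_le_n)

lemma summable_norm_pow_pnat {R : Type*} [NormedRing R] {z : R} (hz : ‖z‖ < 1) :
    Summable fun n : ℕ+ => ‖z ^ (n : ℕ)‖ :=
  (summable_norm_geometric_of_norm_lt_one hz).comp_injective PNat.coe_injective

/-- The change of variables `(m, n) ↦ (m, m + n)`, from pairs of positive integers to the index set
of `cLi2`. -/
def pnatProdEquivLt : ℕ+ × ℕ+ ≃ {q : ℕ+ × ℕ+ // q.1 < q.2} where
  toFun p := ⟨(p.1, p.1 + p.2), PNat.lt_add_right _ _⟩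
  invFun q := (q.1.1, q.1.2 - q.1.1)
  left_inv p := Prod.ext rfl (add_left_cancel (PNat.add_sub_of_lt (PNat.lt_add_right p.1 p.2)))
  right_inv q := Subtype.ext (Prod.ext rfl (PNat.add_sub_of_lt q.2))

lemma hasSum_cLi1_mul_cLi1 (a b : ℕ) {z : ℂ} (hz : ‖z‖ < 1) :
    HasSum (fun p : ℕ+ × ℕ+ =>
      z ^ (p.1 : ℕ) / ((p.1 : ℕ) : ℂ) ^ a * (z ^ (p.2 : ℕ) / ((p.2 : ℕ) : ℂ) ^ b))
      (cLi1 a z * cLi1 b z) := by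
  have summable_norm (k : ℕ) : Summable fun n : ℕ+ => ‖z ^ (n : ℕ) / ((n : ℕ) : ℂ) ^ k‖ :=
    (summable_norm_pow_pnat hz).of_nonneg_of_le (fun _ => norm_nonneg _)
      (fun n => norm_div_pnat_pow_le _ n k)
  rw [cLi1, cLi1, tsum_mul_tsum_of_summable_norm (summable_norm a) (summable_norm b)]
  exact (summable_mul_of_summable_norm (summable_norm a) (summable_norm b)).hasSum

lemma hasSum_cLi2 (a b : ℕ) {z : ℂ} (hz : ‖z‖ < 1) :
    HasSum (fun p : ℕ+ × ℕ+ => z ^ (p.1 + p.2 : ℕ) *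
      (((p.1 : ℕ) : ℂ)⁻¹ ^ a * ((p.1 + p.2 : ℕ) : ℂ)⁻¹ ^ b)) (cLi2 a b z) := by
  have summable : Summable fun p : ℕ+ × ℕ+ => z ^ (p.1 + p.2 : ℕ) *
      (((p.1 : ℕ) : ℂ)⁻¹ ^ a * ((p.1 + p.2 : ℕ) : ℂ)⁻¹ ^ b) := by
    refine .of_norm_bounded (summable_mul_of_summable_norm (summable_norm_pow_pnat hz).norm
      (summable_norm_pow_pnat hz).norm) fun p => ?_
    calc ‖z ^ (p.1 + p.2 : ℕ) * (((p.1 : ℕ) : ℂ)⁻¹ ^ a * ((p.1 + p.2 : ℕ) : ℂ)⁻¹ ^ b)‖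
        = ‖z ^ (p.1 + p.2 : ℕ) / ((p.1 : ℕ) : ℂ) ^ a / (((p.1 + p.2 : ℕ+) : ℕ) : ℂ) ^ b‖ := by
          simp only [inv_pow, div_eq_mul_inv, mul_assoc, PNat.add_coe]
      _ ≤ ‖z ^ (p.1 + p.2 : ℕ)‖ :=
          (norm_div_pnat_pow_le _ (p.1 + p.2) b).trans (norm_div_pnat_pow_le _ p.1 a)
      _ = ‖z ^ (p.1 : ℕ)‖ * ‖z ^ (p.2 : ℕ)‖ := by rw [pow_add, norm_mul]
  convert summable.hasSum using 1
  rw [cLi2, ← pnatProdEquivLt.tsum_eq]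
  refine tsum_congr fun p => ?_
  simp [pnatProdEquivLt, div_eq_mul_inv, mul_comm]

lemma hasSum_partialFractionSum (a b : ℕ) {z : ℂ} (hz : ‖z‖ < 1) :
    HasSum (fun p : ℕ+ × ℕ+ => z ^ (p.1 + p.2 : ℕ) *
      partialFractionSum ((p.1 : ℕ) : ℂ)⁻¹ ((p.1 + p.2 : ℕ) : ℂ)⁻¹ a b)
      (∑ i ∈ Finset.range a, (b.multichoose i : ℂ) * cLi2 (a - i) (b + i) z) := by
  simpa only [partialFractionSum, Finset.mul_sum, mul_left_comm] using
    hasSum_sum fun i (_ : i ∈ Finset.range a) =>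
      (hasSum_cLi2 (a - i) (b + i) hz).mul_left (b.multichoose i : ℂ)

lemma cLi1_summand_mul_cLi1_summand {a b : ℕ} (hab : a + b ≠ 0) (z : ℂ) (m n : ℕ+) :
    z ^ (m : ℕ) / ((m : ℕ) : ℂ) ^ a * (z ^ (n : ℕ) / ((n : ℕ) : ℂ) ^ b) =
      z ^ (m + n : ℕ) * partialFractionSum ((m : ℕ) : ℂ)⁻¹ ((m + n : ℕ) : ℂ)⁻¹ a b +
        z ^ (n + m : ℕ) * partialFractionSum ((n : ℕ) : ℂ)⁻¹ ((n + m : ℕ) : ℂ)⁻¹ b a := by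
  have inv_mul_inv : ((m : ℕ) : ℂ)⁻¹ * ((n : ℕ) : ℂ)⁻¹ =
      ((m + n : ℕ) : ℂ)⁻¹ * (((m : ℕ) : ℂ)⁻¹ + ((n : ℕ) : ℂ)⁻¹) := by
    have m_add_n_ne_zero : ((m : ℕ) : ℂ) + (n : ℕ) ≠ 0 := by exact_mod_cast (m + n).ne_zero
    push_cast
    field_simp
    ring
  rw [add_comm (n : ℕ), ← mul_add, ← pow_mul_pow_eq_partialFractionSum_add inv_mul_inv hab,
    inv_pow, inv_pow, pow_add]
  ring

lemma choose_pred_add_eq_multichoose {k : ℕ} (hk : 1 ≤ k) (i : ℕ) :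
    (k - 1 + i).choose i = k.multichoose i := by
  rw [Nat.multichoose_eq, Nat.sub_add_comm hk]

/-- for positive integers `k₁, k₂` and `|z| < 1`, the integral
shuffle product formula
`Li_{k₁}(z)·Li_{k₂}(z) = Σ_{i=0}^{k₁−1} C(k₂−1+i,i)·Li_{k₁−i,k₂+i}(z)
                       + Σ_{j=0}^{k₂−1} C(k₁−1+j,j)·Li_{k₂−j,k₁+j}(z)`. -/
theorem mpl_shuffle (k₁ k₂ : ℕ) (h₁ : 1 ≤ k₁) (h₂ : 1 ≤ k₂) :
    ∀ z : ℂ, ‖z‖ < 1 →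
      cLi1 k₁ z * cLi1 k₂ z =
        (∑ i ∈ Finset.range k₁, (Nat.choose (k₂ - 1 + i) i : ℂ) * cLi2 (k₁ - i) (k₂ + i) z) +
        (∑ j ∈ Finset.range k₂, (Nat.choose (k₁ - 1 + j) j : ℂ) * cLi2 (k₂ - j) (k₁ + j) z) := by
  intro z hz
  simp only [choose_pred_add_eq_multichoose h₁, choose_pred_add_eq_multichoose h₂]
  have product := hasSum_cLi1_mul_cLi1 k₁ k₂ hz
  simp only [cLi1_summand_mul_cLi1_summand (show k₁ + k₂ ≠ 0 by lia)] at product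
  have swapped := (Equiv.prodComm ℕ+ ℕ+).hasSum_iff.mpr (hasSum_partialFractionSum k₂ k₁ hz)
  exact product.unique ((hasSum_partialFractionSum k₁ k₂ hz).add swapped)
end

section
/- Let p be a prime and k₁, k₂ positive integers. For every z ∈ ℚ_p with p-adic norm ‖z‖_p < 1, the p-adic multiple polylogarithms satisfy the integral shuffle product formula: Li_{k₁}(z)·Li_{k₂}(z) = Σ_{i=0}^{k₁−1} C(k₂−1+i, i)·Li_{k₁−i, k₂+i}(z) + Σ_{j=0}^{k₂−1} C(k₁−1+j, j)·Li_{k₂−j, k₁+j}(z) in ℚ_p, where C(·,·) denotes the binomial coefficient. -/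
/-!
Multiplying out the two series gives a sum over pairs `(m, n)` of positive integers of
`z ^ (m + n) / (m ^ k₁ * n ^ k₂)`. Partial fractions expand `1 / (m ^ k₁ * n ^ k₂)` into terms
`1 / (m ^ a * (m + n) ^ b)` and `1 / (n ^ a * (m + n) ^ b)`, and the substitution
`(n₁, n₂) = (m, m + n)`, respectively `(n, m + n)`, turns each of these into a double
polylogarithm. The partial fractions are the Chaundy–Bullard identity at `x = m / (m + n)`.

Convergence only requires `‖n‖⁻¹` to grow at most polynomially in the integer `n`. By Ostrowski's
theorem this holds in every normed field of characteristic zero.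
-/

open Finset

section PartialFractions

theorem one_sub_mul_sum_choose_mul_pow {R : Type*} [CommRing R] (x : R) (a b : ℕ) :
    (1 - x) * ∑ i ∈ range a, ((b + 1 + i).choose i : R) * x ^ i =
      ∑ i ∈ range a, ((b + i).choose i : R) * x ^ i - ((b + a).choose (b + 1) : R) * x ^ a := by
  induction a with
  | zero => simp
  | succ a ih =>
    have pascal : (b + 1 + a).choose (b + 1) = (b + a).choose b + (b + a).choose (b + 1) := by
      rw [add_right_comm, Nat.choose_succ_succ]
    rw [sum_range_succ, sum_range_succ, mul_add, ih, ← Nat.choose_symm_add, ← Nat.choose_symm_add,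
      show b + (a + 1) = b + 1 + a by ring, pascal]
    push_cast
    ring

theorem chaundy_bullard {R : Type*} [CommRing R] (x : R) (a b : ℕ) :
    (1 - x) ^ (b + 1) * ∑ i ∈ range (a + 1), ((b + i).choose i : R) * x ^ i +
      x ^ (a + 1) * ∑ j ∈ range (b + 1), ((a + j).choose j : R) * (1 - x) ^ j = 1 := by
  induction b with
  | zero => simp [mul_neg_geom_sum]
  | succ b ih =>
    rw [sum_range_succ _ (b + 1), pow_succ, mul_assoc, one_sub_mul_sum_choose_mul_pow,
      show b + (a + 1) = a + (b + 1) by ring]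
    linear_combination ih

variable {K : Type*} [Field K] {x y : K}

theorem inv_mul_div_pow_mul_div_pow {s : K} (hx : x ≠ 0) (hy : y ≠ 0) {a i : ℕ} (b : ℕ)
    (hi : i ≤ a) :
    (x ^ a * y ^ b)⁻¹ * ((y / s) ^ b * (x / s) ^ i) = (x ^ (a - i) * s ^ (b + i))⁻¹ := by
  rw [pow_sub₀ x hx hi, pow_add, div_pow, div_pow]
  field_simp

theorem inv_pow_mul_pow_eq_sum_add_sum (hx : x ≠ 0) (hy : y ≠ 0) (hxy : x + y ≠ 0) (a b : ℕ) :
    (x ^ (a + 1) * y ^ (b + 1))⁻¹ =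
      ∑ i ∈ range (a + 1),
        ((b + i).choose i : K) * (x ^ (a + 1 - i) * (x + y) ^ (b + 1 + i))⁻¹ +
      ∑ j ∈ range (b + 1),
        ((a + j).choose j : K) * (y ^ (b + 1 - j) * (x + y) ^ (a + 1 + j))⁻¹ := by
  have key := chaundy_bullard (x / (x + y)) a b
  rw [one_sub_div hxy, add_sub_cancel_left] at key
  rw [← mul_one (_)⁻¹, ← key, mul_add, mul_sum, mul_sum, mul_sum, mul_sum]
  congr 1 <;> refine sum_congr rfl fun i hi => ?_
  · rw [← inv_mul_div_pow_mul_div_pow hx hy (b + 1) (mem_range.1 hi).le]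
    ring
  · rw [← inv_mul_div_pow_mul_div_pow hy hx (a + 1) (mem_range.1 hi).le]
    ring

end PartialFractions

section Growth

theorem inv_padicNorm_natCast_le (p : ℕ) [Fact p.Prime] {n : ℕ} (hn : n ≠ 0) :
    (padicNorm p n)⁻¹ ≤ n := by
  rw [padicNorm.eq_zpow_of_nonzero (Nat.cast_ne_zero.2 hn), padicValRat.of_nat, zpow_neg, inv_inv,
    zpow_natCast]
  exact_mod_cast Nat.le_of_dvd (Nat.pos_of_ne_zero hn) pow_padicValNat_dvd

theorem exists_inv_natCast_le_pow_of_isEquiv {f g : AbsoluteValue ℚ ℝ} (hfg : f.IsEquiv g)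
    (hg : ∀ n : ℕ, n ≠ 0 → (g n)⁻¹ ≤ n) : ∃ N : ℕ, ∀ n : ℕ, n ≠ 0 → (f n)⁻¹ ≤ n ^ N := by
  obtain ⟨c, hc, hfg⟩ := Rat.AbsoluteValue.exists_nat_rpow_iff_isEquiv.2 hfg
  refine ⟨⌈c⁻¹⌉₊, fun n hn => ?_⟩
  calc (f n)⁻¹ = ((g n)⁻¹) ^ c⁻¹ := by
        rw [← hfg, ← Real.inv_rpow (f.nonneg _),
          Real.rpow_rpow_inv (inv_nonneg.2 (f.nonneg _)) hc.ne']
    _ ≤ (n : ℝ) ^ c⁻¹ :=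
        Real.rpow_le_rpow (inv_nonneg.2 (g.nonneg _)) (hg n hn) (inv_nonneg.2 hc.le)
    _ ≤ (n : ℝ) ^ (⌈c⁻¹⌉₊ : ℝ) :=
        Real.rpow_le_rpow_of_exponent_le (by exact_mod_cast Nat.one_le_iff_ne_zero.2 hn)
          (Nat.le_ceil _)
    _ = (n : ℝ) ^ ⌈c⁻¹⌉₊ := Real.rpow_natCast _ _

theorem exists_inv_absoluteValue_natCast_le_pow (f : AbsoluteValue ℚ ℝ) :
    ∃ N : ℕ, ∀ n : ℕ, n ≠ 0 → (f n)⁻¹ ≤ n ^ N := by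
  by_cases hf : f.IsNontrivial
  · rcases Rat.AbsoluteValue.equiv_real_or_padic f hf with hreal | ⟨p, ⟨_, hpadic⟩, -⟩
    · refine exists_inv_natCast_le_pow_of_isEquiv hreal fun n hn => ?_
      have one_le : (1 : ℝ) ≤ n := by exact_mod_cast Nat.one_le_iff_ne_zero.2 hn
      simpa using (inv_le_one_of_one_le₀ one_le).trans one_le
    · refine exists_inv_natCast_le_pow_of_isEquiv hpadic fun n hn => ?_
      rw [Rat.AbsoluteValue.padic_eq_padicNorm]
      exact_mod_cast inv_padicNorm_natCast_le p hn
  · refine ⟨0, fun n hn => ?_⟩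
    simp [AbsoluteValue.not_isNontrivial_apply hf (Nat.cast_ne_zero.2 hn)]

variable (K : Type*) [NormedField K] [CharZero K]

theorem exists_inv_norm_natCast_le_pow : ∃ N : ℕ, ∀ n : ℕ, n ≠ 0 → ‖(n : K)‖⁻¹ ≤ n ^ N := by
  let f : AbsoluteValue ℚ ℝ := (NormedField.toAbsoluteValue K).comp (algebraMap ℚ K).injective
  have apply_natCast (n : ℕ) : f n = ‖(n : K)‖ := congrArg norm (map_natCast (algebraMap ℚ K) n)
  simpa only [apply_natCast] using exists_inv_absoluteValue_natCast_le_pow f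

theorem summable_pow_div_norm_natCast_pow {r : ℝ} (hr₀ : 0 ≤ r) (hr₁ : r < 1) (k : ℕ) :
    Summable fun n : ℕ+ => r ^ (n : ℕ) / ‖((n : ℕ) : K)‖ ^ k := by
  obtain ⟨N, hN⟩ := exists_inv_norm_natCast_le_pow K
  have majorant : Summable fun n : ℕ+ => ((n : ℕ) : ℝ) ^ (N * k) * r ^ (n : ℕ) :=
    (summable_pow_mul_geometric_of_norm_lt_one (N * k) (r := r)
      (by rwa [Real.norm_of_nonneg hr₀])).comp_injective PNat.coe_injective
  refine majorant.of_nonneg_of_le (fun n => by positivity) fun n => ?_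
  rw [div_eq_mul_inv, mul_comm, ← inv_pow, pow_mul]
  gcongr
  exact hN n n.ne_zero

end Growth

section Polylog

/-- The polylogarithm `Li_k(z) = Σ_{n ≥ 1} z ^ n / n ^ k` over an arbitrary normed field, so that
`pLi1` is the case of `ℚ_[p]`. -/
noncomputable def polylog {K : Type*} [NormedField K] (k : ℕ) (z : K) : K :=
  ∑' n : ℕ+, z ^ (n : ℕ) / ((n : ℕ) : K) ^ k

/-- The double polylogarithm `Li_{a,b}(z) = Σ_{0 < n₁ < n₂} z ^ n₂ / (n₁ ^ a * n₂ ^ b)` over an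
arbitrary normed field, so that `pLi2` is the case of `ℚ_[p]`. -/
noncomputable def doublePolylog {K : Type*} [NormedField K] (a b : ℕ) (z : K) : K :=
  ∑' q : {q : ℕ+ × ℕ+ // q.1 < q.2},
    z ^ (q.1.2 : ℕ) / (((q.1.1 : ℕ) : K) ^ a * ((q.1.2 : ℕ) : K) ^ b)

/-- The bijection `(m, n) ↦ (m, m + n)` from pairs of positive integers to strictly increasing
pairs, which indexes a double polylogarithm by the terms of a product of two series. -/
def prodEquivLt : ℕ+ × ℕ+ ≃ {q : ℕ+ × ℕ+ // q.1 < q.2} where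
  toFun q := ⟨(q.1, q.1 + q.2), PNat.lt_add_right q.1 q.2⟩
  invFun q := (q.1.1, q.1.2 - q.1.1)
  left_inv q := by simp [add_comm q.1 q.2]
  right_inv q := Subtype.ext (Prod.ext rfl (PNat.add_sub_of_lt q.2))

variable {K : Type*} [NormedField K] [CharZero K] {z : K}

theorem summable_norm_polylog (hz : ‖z‖ < 1) (k : ℕ) :
    Summable fun n : ℕ+ => ‖z ^ (n : ℕ) / ((n : ℕ) : K) ^ k‖ := by
  simpa only [norm_div, norm_pow] using
    summable_pow_div_norm_natCast_pow K (norm_nonneg z) hz k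

variable [CompleteSpace K]

theorem summable_doublePolylog (hz : ‖z‖ < 1) (a b : ℕ) :
    Summable fun q : {q : ℕ+ × ℕ+ // q.1 < q.2} =>
      z ^ (q.1.2 : ℕ) / (((q.1.1 : ℕ) : K) ^ a * ((q.1.2 : ℕ) : K) ^ b) := by
  -- As `n₁ < n₂`, the numerator `‖z‖ ^ n₂ = r ^ (2 * n₂)` is at most `r ^ n₁ * r ^ n₂`.
  obtain ⟨r, hr₀, hr⟩ : ∃ r : ℝ, 0 ≤ r ∧ r ^ 2 = ‖z‖ :=
    ⟨√‖z‖, Real.sqrt_nonneg _, Real.sq_sqrt (norm_nonneg z)⟩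
  have hr₁ : r < 1 := (sq_lt_one_iff₀ hr₀).1 (hr ▸ hz)
  have majorant := (summable_pow_div_norm_natCast_pow K hr₀ hr₁ a).mul_of_nonneg
    (summable_pow_div_norm_natCast_pow K hr₀ hr₁ b) (fun _ => by positivity)
    (fun _ => by positivity)
  refine .of_norm_bounded (majorant.subtype {q | q.1 < q.2}) fun ⟨⟨n₁, n₂⟩, (hlt : n₁ < n₂)⟩ => ?_
  have numerator_le : ‖z‖ ^ (n₂ : ℕ) ≤ r ^ (n₁ : ℕ) * r ^ (n₂ : ℕ) := by
    rw [← hr, ← pow_mul, ← pow_add]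
    exact pow_le_pow_of_le_one hr₀ hr₁.le (by have : (n₁ : ℕ) < n₂ := hlt; omega)
  simp only [Function.comp_apply, norm_div, norm_mul, norm_pow, div_mul_div_comm]
  gcongr

theorem hasSum_doublePolylog (hz : ‖z‖ < 1) (a b : ℕ) :
    HasSum (fun q : ℕ+ × ℕ+ => z ^ (q.1 + q.2 : ℕ) * (((q.1 : ℕ) : K) ^ a * (q.1 + q.2) ^ b)⁻¹)
      (doublePolylog a b z) := by
  simpa [doublePolylog, Function.comp_def, prodEquivLt, div_eq_mul_inv] using
    prodEquivLt.hasSum_iff.2 (summable_doublePolylog hz a b).hasSum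

theorem hasSum_doublePolylog_swap (hz : ‖z‖ < 1) (a b : ℕ) :
    HasSum (fun q : ℕ+ × ℕ+ => z ^ (q.1 + q.2 : ℕ) * (((q.2 : ℕ) : K) ^ a * (q.1 + q.2) ^ b)⁻¹)
      (doublePolylog a b z) := by
  simpa [Function.comp_def, add_comm] using
    (Equiv.prodComm ℕ+ ℕ+).hasSum_iff.2 (hasSum_doublePolylog hz a b)

theorem hasSum_polylog_mul_polylog (hz : ‖z‖ < 1) (k₁ k₂ : ℕ) :
    HasSum (fun q : ℕ+ × ℕ+ => z ^ (q.1 + q.2 : ℕ) * (((q.1 : ℕ) : K) ^ k₁ * (q.2 : ℕ) ^ k₂)⁻¹)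
      (polylog k₁ z * polylog k₂ z) := by
  have h₁ := summable_norm_polylog hz k₁
  have h₂ := summable_norm_polylog hz k₂
  have hprod := summable_mul_of_summable_norm h₁ h₂
  have key := h₁.of_norm.hasSum.mul h₂.of_norm.hasSum hprod
  simpa only [polylog, pow_add, ← div_eq_mul_inv, div_mul_div_comm] using key

theorem padic_mpl_shuffle_general (hz : ‖z‖ < 1) {k₁ k₂ : ℕ} (h₁ : 1 ≤ k₁) (h₂ : 1 ≤ k₂) :
    polylog k₁ z * polylog k₂ z =
      ∑ i ∈ range k₁, ((k₂ - 1 + i).choose i : K) * doublePolylog (k₁ - i) (k₂ + i) z +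
      ∑ j ∈ range k₂, ((k₁ - 1 + j).choose j : K) * doublePolylog (k₂ - j) (k₁ + j) z := by
  obtain ⟨a, rfl⟩ := Nat.exists_eq_add_of_le' h₁
  obtain ⟨b, rfl⟩ := Nat.exists_eq_add_of_le' h₂
  simp only [Nat.add_sub_cancel]
  have hleft := hasSum_sum (s := range (a + 1)) fun i _ =>
    (hasSum_doublePolylog hz (a + 1 - i) (b + 1 + i)).mul_left ((b + i).choose i : K)
  have hright := hasSum_sum (s := range (b + 1)) fun j _ =>
    (hasSum_doublePolylog_swap hz (b + 1 - j) (a + 1 + j)).mul_left ((a + j).choose j : K)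
  refine (hasSum_polylog_mul_polylog hz (a + 1) (b + 1)).unique ?_
  refine (hleft.add hright).congr_fun fun ⟨m, n⟩ => ?_
  have hm : ((m : ℕ) : K) ≠ 0 := Nat.cast_ne_zero.2 m.ne_zero
  have hn : ((n : ℕ) : K) ≠ 0 := Nat.cast_ne_zero.2 n.ne_zero
  have hmn : ((m : ℕ) : K) + (n : ℕ) ≠ 0 := by exact_mod_cast (m + n).ne_zero
  rw [inv_pow_mul_pow_eq_sum_add_sum hm hn hmn, mul_add, mul_sum, mul_sum]
  simp only [mul_left_comm]

end Polylog

/-- The p-adic polylogarithm `Li_k(z) = Σ_{n≥1} z^n/n^k` on the open p-adic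
unit disc. -/
noncomputable def pLi1 (p : ℕ) [Fact p.Prime] (k : ℕ) (z : ℚ_[p]) : ℚ_[p] :=
  ∑' n : ℕ+, z ^ (n : ℕ) / ((n : ℕ) : ℚ_[p]) ^ k

/-- The depth-two p-adic multiple polylogarithm
`Li_{a,b}(z) = Σ_{0<n₁<n₂} z^{n₂}/(n₁^a n₂^b)`. -/
noncomputable def pLi2 (p : ℕ) [Fact p.Prime] (a b : ℕ) (z : ℚ_[p]) : ℚ_[p] :=
  ∑' q : {q : ℕ+ × ℕ+ // q.1 < q.2},
    z ^ ((q.1.2 : ℕ)) / (((q.1.1 : ℕ) : ℚ_[p]) ^ a * ((q.1.2 : ℕ) : ℚ_[p]) ^ b)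

/-- for a prime `p`, positive integers `k₁, k₂`, and `z ∈ ℚ_p`
with `‖z‖_p < 1`, the integral shuffle product formula
`Li_{k₁}(z)·Li_{k₂}(z) = Σ_{i=0}^{k₁−1} C(k₂−1+i,i)·Li_{k₁−i,k₂+i}(z)
                       + Σ_{j=0}^{k₂−1} C(k₁−1+j,j)·Li_{k₂−j,k₁+j}(z)`
holds in `ℚ_p`. -/
theorem padic_mpl_shuffle (p : ℕ) [Fact p.Prime] (k₁ k₂ : ℕ)
    (h₁ : 1 ≤ k₁) (h₂ : 1 ≤ k₂) :
    ∀ z : ℚ_[p], ‖z‖ < 1 →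
      pLi1 p k₁ z * pLi1 p k₂ z =
        (∑ i ∈ Finset.range k₁,
          (Nat.choose (k₂ - 1 + i) i : ℚ_[p]) * pLi2 p (k₁ - i) (k₂ + i) z) +
        (∑ j ∈ Finset.range k₂,
          (Nat.choose (k₁ - 1 + j) j : ℚ_[p]) * pLi2 p (k₂ - j) (k₁ + j) z) := by
  exact fun _ hz => padic_mpl_shuffle_general hz h₁ h₂
end
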